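/- Let G be a simple graph on n vertices, let u ≠ v be vertices of G, and let σ be the permutation of the vertex set that transposes u and v and fixes all other vertices. Then σ is an automorphism of G if and only if x = e_u − e_v is an eigenvector of L(G); in that case the corresponding eigenvalue is λ = deg(u) + A(G)_{u,v}. -/

import Mathlib

open Classical Matrix

noncomputable def lap {n : ℕ} (G : SimpleGraph (Fin n)) : Matrix (Fin n) (Fin n) ℝ :=
  Matrix.of fun i j =>
    (if i = j then ((G.neighborSet i).ncard : ℝ) else 0) - (if G.Adj i j then 1 else 0)

def IsTwin {n : ℕ} (G : SimpleGraph (Fin n)) (u v : Fin n) : Prop :=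
  u ≠ v ∧ G.neighborSet u \ {v} = G.neighborSet v \ {u}

def IsEigenvalue {n : ℕ} (M : Matrix (Fin n) (Fin n) ℝ) (μ : ℝ) : Prop :=
  ∃ x : Fin n → ℝ, x ≠ 0 ∧ M.mulVec x = μ • x

def HasSimpleSpectrum {n : ℕ} (M : Matrix (Fin n) (Fin n) ℝ) : Prop :=
  ∃ μ : Fin n → ℝ, Function.Injective μ ∧ ∀ i, IsEigenvalue M (μ i)

def Controllable {n : ℕ} (M : Matrix (Fin n) (Fin n) ℝ) (b : Fin n → ℝ) : Prop :=
  Submodule.span ℝ (Set.range fun k : Fin n => (M ^ (k : ℕ)).mulVec b) = ⊤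

def StronglyUncontrollable {n : ℕ} (G : SimpleGraph (Fin n)) : Prop :=
  G.Connected ∧ HasSimpleSpectrum (lap G) ∧
    ∀ b : Fin n → ℝ, (∀ i, b i = 0 ∨ b i = 1) → ¬ Controllable (lap G) b

def Pmat {n k : ℕ} (c : Fin n → Fin k) : Matrix (Fin n) (Fin k) ℝ :=
  Matrix.of fun i j => if c i = j then 1 else 0

def IsAEP {n k : ℕ} (G : SimpleGraph (Fin n)) (c : Fin n → Fin k) : Prop :=
  ∀ i j : Fin k, i ≠ j → ∀ x y : Fin n, c x = i → c y = i →
    (G.neighborSet x ∩ {z | c z = j}).ncard = (G.neighborSet y ∩ {z | c z = j}).ncard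

noncomputable def quotLap {n k : ℕ} (G : SimpleGraph (Fin n)) (c : Fin n → Fin k) :
    Matrix (Fin k) (Fin k) ℝ :=
  ((Pmat c)ᵀ * Pmat c)⁻¹ * (Pmat c)ᵀ * lap G * Pmat c

def IsQuotAEP {k m : ℕ} (Lq : Matrix (Fin k) (Fin k) ℝ) (r : Fin k → Fin m) : Prop :=
  ∀ a b : Fin m, a ≠ b → ∀ C C' : Fin k, r C = a → r C' = a →
    ∑ C'' ∈ Finset.univ.filter (fun C'' => r C'' = b), Lq C C'' =
      ∑ C'' ∈ Finset.univ.filter (fun C'' => r C'' = b), Lq C' C''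

def IsGraphAut {n : ℕ} (G : SimpleGraph (Fin n)) (σ : Equiv.Perm (Fin n)) : Prop :=
  ∀ x y, G.Adj x y ↔ G.Adj (σ x) (σ y)

def joinOne {n : ℕ} (G : SimpleGraph (Fin n)) : SimpleGraph (Fin (n + 1)) where
  Adj x y := x ≠ y ∧ ((x : ℕ) = n ∨ (y : ℕ) = n ∨
    ∃ (hx : (x : ℕ) < n) (hy : (y : ℕ) < n), G.Adj ⟨x, hx⟩ ⟨y, hy⟩)
  symm := by
    refine ⟨?_⟩
    rintro x y ⟨hxy, h⟩
    refine ⟨hxy.symm, ?_⟩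
    rcases h with h | h | ⟨hx, hy, h⟩
    exacts [Or.inr (Or.inl h), Or.inl h, Or.inr (Or.inr ⟨hy, hx, h.symm⟩)]
  loopless := ⟨fun x h => h.1 rfl⟩

def joinTwo {n : ℕ} (G : SimpleGraph (Fin n)) : SimpleGraph (Fin (n + 2)) where
  Adj x y := x ≠ y ∧ (((x : ℕ) < n ∧ n ≤ (y : ℕ)) ∨ ((y : ℕ) < n ∧ n ≤ (x : ℕ)) ∨
    ∃ (hx : (x : ℕ) < n) (hy : (y : ℕ) < n), G.Adj ⟨x, hx⟩ ⟨y, hy⟩)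
  symm := by
    refine ⟨?_⟩
    rintro x y ⟨hxy, h⟩
    refine ⟨hxy.symm, ?_⟩
    rcases h with h | h | ⟨hx, hy, h⟩
    exacts [Or.inr (Or.inl h), Or.inl h, Or.inr (Or.inr ⟨hy, hx, h.symm⟩)]
  loopless := ⟨fun x h => h.1 rfl⟩

def addPendant {n : ℕ} (G : SimpleGraph (Fin n)) (v : Fin n) : SimpleGraph (Fin (n + 1)) where
  Adj x y := ((x : ℕ) = n ∧ (y : ℕ) = (v : ℕ)) ∨ ((y : ℕ) = n ∧ (x : ℕ) = (v : ℕ)) ∨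
    ∃ (hx : (x : ℕ) < n) (hy : (y : ℕ) < n), G.Adj ⟨x, hx⟩ ⟨y, hy⟩
  symm := by
    refine ⟨?_⟩
    rintro x y (h | h | ⟨hx, hy, h⟩)
    exacts [Or.inr (Or.inl h), Or.inl h, Or.inr (Or.inr ⟨hy, hx, h.symm⟩)]
  loopless := by
    refine ⟨?_⟩
    intro x h
    have hv := v.isLt
    rcases h with ⟨h1, h2⟩ | ⟨h1, h2⟩ | ⟨hx, hy, h⟩
    · omega
    · omega
    · exact G.loopless.irrefl _ h

/-!
Let `P` be the permutation matrix of the transposition of `u` and `v`, and put `x = e_u - e_v`.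
The transposition is an automorphism exactly when `P` commutes with the Laplacian `L`. Since
`P = 1 - x xᵀ`, this means that `L` commutes with `x xᵀ`. As `L` is symmetric, this says that
`(L x) xᵀ = x (L x)ᵀ`, that is, `L x` is a multiple of `x`. Since `x_u = 1`, column `u`
of this equation identifies the multiple as `(L x)_u = L_uu - L_uv`.
-/

section Commutation

variable {m R : Type*}

theorem exists_eq_smul_iff_of_apply_eq_one [MulOneClass R] {x y : m → R} {u : m} (hx : x u = 1) :
    (∃ μ : R, y = μ • x) ↔ y = y u • x := by
  constructor
  · rintro ⟨μ, rfl⟩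
    simp [hx]
  · exact fun h ↦ ⟨y u, h⟩

theorem commute_vecMulVec_self_iff [Fintype m] [CommSemiring R] {M : Matrix m m R}
    (hM : M.IsSymm) {x : m → R} {u : m} (hx : x u = 1) :
    Commute M (vecMulVec x x) ↔ M *ᵥ x = (M *ᵥ x) u • x := by
  have vecMul_eq_mulVec : x ᵥ* M = M *ᵥ x := by rw [← mulVec_transpose, hM.eq]
  rw [commute_iff_eq, mul_vecMulVec, vecMulVec_mul, vecMul_eq_mulVec]
  constructor
  · intro h
    ext a
    simpa [vecMulVec_apply, hx, mul_comm] using congrFun₂ h a u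
  · intro h
    rw [h, smul_vecMulVec, vecMulVec_smul]

variable [DecidableEq m]

theorem single_sub_single_apply_left [AddGroupWithOne R] {u v : m} (huv : u ≠ v) :
    (Pi.single u 1 - Pi.single v 1 : m → R) u = 1 := by
  simp [huv]

theorem ite_sub_ite_eq_single_sub_single [AddGroupWithOne R] (u v : m) :
    (fun i ↦ (if i = u then (1 : R) else 0) - if i = v then 1 else 0) =
      Pi.single u 1 - Pi.single v 1 := by
  ext i
  simp only [Pi.sub_apply, Pi.single_apply]

theorem swap_eq_one_sub_vecMulVec [Ring R] (u v : m) :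
    Matrix.swap R u v =
      1 - vecMulVec (Pi.single u 1 - Pi.single v 1) (Pi.single u 1 - Pi.single v 1) := by
  ext a b
  simp only [Matrix.swap, PEquiv.toMatrix_toPEquiv_apply, Matrix.sub_apply, one_apply,
    vecMulVec_apply, Pi.sub_apply, Pi.single_apply, Equiv.swap_apply_def]
  split_ifs <;> grind

variable [Fintype m]

theorem commute_permMatrix_iff [NonAssocSemiring R] (M : Matrix m m R) (σ : Equiv.Perm m) :
    Commute M (σ.permMatrix R) ↔ M.submatrix σ σ = M := by
  rw [commute_iff_eq, PEquiv.mul_toMatrix_toPEquiv, PEquiv.toMatrix_toPEquiv_mul]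
  constructor
  · intro h
    simpa using (congrArg (·.submatrix id σ) h).symm
  · intro h
    simpa using (congrArg (·.submatrix id σ.symm) h).symm

theorem mulVec_single_sub_single_apply [NonAssocRing R] (M : Matrix m m R) (u v a : m) :
    (M *ᵥ (Pi.single u 1 - Pi.single v 1)) a = M a u - M a v := by
  simp [mulVec_sub]

theorem submatrix_swap_eq_self_iff [CommRing R] {M : Matrix m m R} (hM : M.IsSymm) {u v : m}
    (huv : u ≠ v) :
    M.submatrix (Equiv.swap u v) (Equiv.swap u v) = M ↔
      M *ᵥ (Pi.single u 1 - Pi.single v 1) =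
        (M u u - M u v) • (Pi.single u 1 - Pi.single v 1) := by
  rw [← commute_permMatrix_iff, ← Matrix.swap, swap_eq_one_sub_vecMulVec,
    ← mulVec_single_sub_single_apply,
    ← commute_vecMulVec_self_iff hM (single_sub_single_apply_left huv)]
  constructor
  · intro h
    simpa using (Commute.one_right M).sub_right h
  · exact (Commute.one_right M).sub_right

end Commutation

section Laplacian

theorem ncard_neighborSet_eq_degree {V : Type*} (G : SimpleGraph V) (v : V)
    [Fintype (G.neighborSet v)] : (G.neighborSet v).ncard = G.degree v := by
  rw [← G.coe_neighborFinset, Set.ncard_coe_finset, G.card_neighborFinset_eq_degree]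

variable {V W R : Type*} [Fintype V] [Fintype W] [DecidableEq V] [DecidableEq W]

theorem lapMatrix_apply [AddGroupWithOne R] (G : SimpleGraph V) [DecidableRel G.Adj] (a b : V) :
    G.lapMatrix R a b = (if a = b then (G.degree a : R) else 0) - if G.Adj a b then 1 else 0 := by
  simp [SimpleGraph.lapMatrix, SimpleGraph.degMatrix, diagonal_apply]

theorem lap_eq_lapMatrix {n : ℕ} (G : SimpleGraph (Fin n)) : lap G = G.lapMatrix ℝ := by
  ext a b
  simp [lap, lapMatrix_apply, ncard_neighborSet_eq_degree]

variable (R) in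
theorem lapMatrix_submatrix_eq_iff [AddGroupWithOne R] [NeZero (1 : R)]
    (G : SimpleGraph V) (H : SimpleGraph W) [DecidableRel G.Adj] [DecidableRel H.Adj]
    (e : V ≃ W) :
    (H.lapMatrix R).submatrix e e = G.lapMatrix R ↔ ∀ a b, G.Adj a b ↔ H.Adj (e a) (e b) := by
  constructor
  · intro h a b
    obtain rfl | hab := eq_or_ne a b
    · simp
    · have indicator_eq : (if H.Adj (e a) (e b) then (1 : R) else 0) =
          if G.Adj a b then 1 else 0 := by
        simpa [lapMatrix_apply, hab] using congrFun₂ h a b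
      by_cases hG : G.Adj a b <;> simpa [hG] using indicator_eq
  · intro h
    let φ : G ≃g H := ⟨e, (h _ _).symm⟩
    have degree_eq (a : V) : H.degree (e a) = G.degree a := φ.degree_eq a
    ext a b
    simp [lapMatrix_apply, degree_eq, h a b]

end Laplacian

theorem stmt15_general {V R : Type*} [Fintype V] [DecidableEq V] [CommRing R] [Nontrivial R]
    (G : SimpleGraph V) [DecidableRel G.Adj] {u v : V} (huv : u ≠ v) :
    ((∀ a b, G.Adj a b ↔ G.Adj (Equiv.swap u v a) (Equiv.swap u v b)) ↔
      ∃ μ : R, G.lapMatrix R *ᵥ (Pi.single u 1 - Pi.single v 1) =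
        μ • (Pi.single u 1 - Pi.single v 1)) ∧
    ((∀ a b, G.Adj a b ↔ G.Adj (Equiv.swap u v a) (Equiv.swap u v b)) →
      G.lapMatrix R *ᵥ (Pi.single u 1 - Pi.single v 1) =
        (G.degree u + if G.Adj u v then 1 else 0 : R) • (Pi.single u 1 - Pi.single v 1)) := by
  have eigenvalue_eq : G.lapMatrix R u u - G.lapMatrix R u v =
      G.degree u + if G.Adj u v then 1 else 0 := by
    simp [lapMatrix_apply, huv]
  rw [exists_eq_smul_iff_of_apply_eq_one (single_sub_single_apply_left huv),
    mulVec_single_sub_single_apply, ← lapMatrix_submatrix_eq_iff R,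
    submatrix_swap_eq_self_iff (G.isSymm_lapMatrix R) huv, eigenvalue_eq]
  exact ⟨Iff.rfl, id⟩

theorem stmt15 {n : ℕ} (G : SimpleGraph (Fin n)) (u v : Fin n) (huv : u ≠ v) :
    ((∀ a b : Fin n, G.Adj a b ↔ G.Adj (Equiv.swap u v a) (Equiv.swap u v b)) ↔
      ∃ μ : ℝ, (lap G).mulVec
          (fun i => (if i = u then (1 : ℝ) else 0) - (if i = v then 1 else 0)) =
        μ • (fun i => (if i = u then (1 : ℝ) else 0) - (if i = v then 1 else 0))) ∧
    ((∀ a b : Fin n, G.Adj a b ↔ G.Adj (Equiv.swap u v a) (Equiv.swap u v b)) →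
      (lap G).mulVec
          (fun i => (if i = u then (1 : ℝ) else 0) - (if i = v then 1 else 0)) =
        (((G.neighborSet u).ncard : ℝ) + (if G.Adj u v then 1 else 0)) •
          (fun i => (if i = u then (1 : ℝ) else 0) - (if i = v then 1 else 0))) := by
  simpa only [lap_eq_lapMatrix, ncard_neighborSet_eq_degree, ite_sub_ite_eq_single_sub_single] using
    stmt15_general (R := ℝ) G huv
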